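/- For every i ∈ [n], the saturation of the ideal J_n + ⟨p^+_{n,i}⟩ with respect to the product of all variables equals J_n + ⟨p^+_{n,1}, …, p^+_{n,n}⟩: ( J_n + ⟨p^+_{n,i}⟩ ) : ( ∏_{(j,k) ∈ P} x_{jk} )^∞ = J_n + ⟨ p^+_{n,j} : j ∈ [n] ⟩. (When n is even all p^+_{n,j} coincide with the single polynomial p^+_n.) -/

import Mathlib

open scoped BigOperators

namespace Veronese

open MvPolynomial

/-- `c m = C(m,2)`. -/
def c (m : ℕ) : ℕ := m.choose 2

variable (n : ℕ)

/-- multiplicity (as ℤ) of the index `i` in the unordered pair `s`. -/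
def wt (s : Sym2 (Fin n)) : Fin n → ℤ :=
  Sym2.lift ⟨fun a b i => (if i = a then 1 else 0) + (if i = b then 1 else 0),
    fun a b => funext fun i => add_comm _ _⟩ s

/-- The Veronese grading map `V_n : ℤ^P → ℤ^n`, sending `e_{ij} ↦ e_i + e_j`. -/
def Vmap : (Sym2 (Fin n) → ℤ) →ₗ[ℤ] (Fin n → ℤ) where
  toFun u := fun i => ∑ s : Sym2 (Fin n), u s * wt n s i
  map_add' u v := funext fun i => by
    simp [add_mul, Finset.sum_add_distrib]
  map_smul' m u := funext fun i => by
    simp [Finset.mul_sum, smul_eq_mul, mul_assoc]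

/-- The Veronese lattice `L_n = ker V_n`. -/
def Llat : Submodule ℤ (Sym2 (Fin n) → ℤ) := LinearMap.ker (Vmap n)

/-- standard basis vector `e_{ij}` of `ℤ^P`. -/
def e (i j : Fin n) : Sym2 (Fin n) → ℤ := Pi.single s(i, j) 1

lemma e_comm (i j : Fin n) : e n i j = e n j i := by
  unfold e; rw [Sym2.eq_swap]

/-- `[ij|ij] = e_{ii} + e_{jj} - 2 e_{ij}`. -/
def minorVec (i j : Fin n) : Sym2 (Fin n) → ℤ := e n i i + e n j j - 2 • e n i j

/-- The principal minor lattice `L'_n`. -/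
def L'lat : Submodule ℤ (Sym2 (Fin n) → ℤ) :=
  Submodule.span ℤ {v | ∃ i j : Fin n, i < j ∧ v = minorVec n i j}

/-- the last index `n` (zero-based: `n-1`) of `Fin n`. -/
def lastIdx (hn : 0 < n) : Fin n := ⟨n - 1, Nat.sub_lt hn one_pos⟩

/-- embedding `[n-1] → [n]`. -/
def ι : Fin (n - 1) → Fin n := Fin.castLE (Nat.sub_le n 1)

/-- `[in|jn] = e_{ij} + e_{nn} - e_{in} - e_{jn}` for `i,j ∈ [n-1]`. -/
def Bvec (hn : 0 < n) : Sym2 (Fin (n - 1)) → (Sym2 (Fin n) → ℤ) :=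
  Sym2.lift ⟨fun i j =>
      e n (ι n i) (ι n j) + e n (lastIdx n hn) (lastIdx n hn)
        - e n (ι n i) (lastIdx n hn) - e n (ι n j) (lastIdx n hn),
    fun i j => by dsimp only; rw [e_comm n (ι n i) (ι n j)]; ring⟩

/-- The family `B'`: `[in|in]` on the diagonal, `2[in|jn]` off it. -/
noncomputable def B'vec (hn : 0 < n) (s : Sym2 (Fin (n - 1))) : Sym2 (Fin n) → ℤ :=
  if s.IsDiag then Bvec n hn s else 2 • Bvec n hn s

/-- multiplicity (as ℕ) of the index `i` in the unordered pair `s`. -/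
def wtN (s : Sym2 (Fin n)) : Fin n → ℕ :=
  Sym2.lift ⟨fun a b i => (if i = a then 1 else 0) + (if i = b then 1 else 0),
    fun a b => funext fun i => add_comm _ _⟩ s

/-- The Veronese degree of an exponent vector `u ∈ ℕ^P`. -/
def VN (u : Sym2 (Fin n) →₀ ℕ) : Fin n → ℕ := fun i => ∑ s : Sym2 (Fin n), u s * wtN n s i

/-- The fiber `V_n^{-1}[b] = {u ∈ ℕ^P : V_n u = b}`. -/
def fiber (b : Fin n → ℕ) : Set (Sym2 (Fin n) →₀ ℕ) := {u | VN n u = b}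

/-- natural inclusion `ℕ^P → ℤ^P`. -/
def toZ (u : Sym2 (Fin n) →₀ ℕ) : Sym2 (Fin n) → ℤ := fun s => (u s : ℤ)

lemma fiber_finite (b : Fin n → ℕ) : (fiber n b).Finite := by
  classical
  have hsub : fiber n b ⊆
      ↑(Finset.Iic ((Finsupp.equivFunOnFinite.symm fun _ => ∑ i, b i) : Sym2 (Fin n) →₀ ℕ)) := by
    intro u hu
    simp only [Finset.coe_Iic, Set.mem_Iic, Finsupp.le_def]
    intro s
    induction s using Sym2.ind with
    | _ i j =>
      have h1 : u s(i, j) * wtN n s(i, j) i ≤ VN n u i :=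
        Finset.single_le_sum (f := fun s => u s * wtN n s i)
          (fun s _ => Nat.zero_le _) (Finset.mem_univ s(i, j))
      have h2 : 1 ≤ wtN n s(i, j) i := by
        simp only [wtN, Sym2.lift_mk, if_pos rfl]
        exact Nat.le_add_right 1 _
      have h3 : u s(i, j) ≤ b i := by
        have hb : VN n u i = b i := congrFun hu i
        calc u s(i, j) ≤ u s(i, j) * wtN n s(i, j) i := Nat.le_mul_of_pos_right _ h2
          _ ≤ VN n u i := h1
          _ = b i := hb
      calc u s(i, j) ≤ b i := h3
        _ ≤ ∑ i, b i := Finset.single_le_sum (fun _ _ => Nat.zero_le _) (Finset.mem_univ _)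
        _ = (Finsupp.equivFunOnFinite.symm fun _ => ∑ i, b i) s(i, j) := by
            simp
  exact Set.Finite.subset (Finset.finite_toSet _) hsub

variable (k : Type*) [Field k]

/-- the polynomial ring `k[x_{ij}]`. -/
abbrev R := MvPolynomial (Sym2 (Fin n)) k

/-- The principal minor ideal `J_n`. -/
noncomputable def Jideal : Ideal (R n k) :=
  Ideal.span {f | ∃ i j : Fin n, i < j ∧ f = X s(i, i) * X s(j, j) - X s(i, j) ^ 2}

/-- The map `x_{ij} ↦ t_i t_j`. -/
noncomputable def veroHom : R n k →ₐ[k] MvPolynomial (Fin n) k :=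
  aeval fun s => Sym2.lift ⟨fun a b => X a * X b, fun a b => mul_comm _ _⟩ s

/-- The second Veronese ideal `I_n`. -/
noncomputable def Iideal : Ideal (R n k) := RingHom.ker (veroHom n k)

/-- A ℤ₂-twisting: an automorphism sending each variable to ± itself. -/
def IsTwisting (φ : R n k ≃ₐ[k] R n k) : Prop :=
  ∀ s : Sym2 (Fin n), φ (X s) = X s ∨ φ (X s) = - X s

/-- `f` is V_n-homogeneous of degree `b`. -/
def VHomog (f : R n k) (b : Fin n → ℕ) : Prop := ∀ u ∈ f.support, VN n u = b

/-- The fiber over `b` as a finite set. -/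
noncomputable def fiberFinset (b : Fin n → ℕ) : Finset (Sym2 (Fin n) →₀ ℕ) :=
  (fiber_finite n b).toFinset

/-- generating function of the canonical (0/1 off-diagonal) representatives of
the fiber over `b`. -/
noncomputable def pplusAt (b : Fin n → ℕ) : R n k :=
  ∑ u ∈ (fiberFinset n b).filter (fun u => ∀ s : Sym2 (Fin n), ¬s.IsDiag → u s ≤ 1),
    monomial u (1 : k)

/-- `p⁺_{n,j}` (for `n` odd): fiber over `(n-2,…,n-2) + e_j`. -/
noncomputable def pplusOdd (j : Fin n) : R n k :=
  pplusAt n k fun i => (n - 2) + if i = j then 1 else 0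

/-- `p⁺_n` (for `n` even): fiber over `(n-2,…,n-2)`. -/
noncomputable def pplusEven : R n k :=
  pplusAt n k fun _ => n - 2

/-- `p_n = ∏_{i<j∈[n-1]} (x_{ij} x_{nn} + x_{in} x_{jn})`. -/
noncomputable def pn (hn : 0 < n) : R n k :=
  ∏ p ∈ Finset.univ.filter (fun p : Fin (n - 1) × Fin (n - 1) => p.1 < p.2),
    (X s(ι n p.1, ι n p.2) * X s(lastIdx n hn, lastIdx n hn)
      + X s(ι n p.1, lastIdx n hn) * X s(ι n p.2, lastIdx n hn))


/-- the `V_n`-degree of `p⁺_{n,j}`: `(n-2,…,n-2) + e_j` if `n` is odd,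
`(n-2,…,n-2)` if `n` is even. -/
def bsel (j : Fin n) : Fin n → ℕ :=
  fun i => if n % 2 = 1 then (n - 2) + (if i = j then 1 else 0) else n - 2

/-- the polynomial `p⁺_{n,j}` (independent of `j` for `n` even). -/
noncomputable def pplus (j : Fin n) : R n k := pplusAt n k (bsel n j)

section Aux

/-- the bigrading group-like monoid: Veronese degree and off-diagonal parities -/
abbrev Gam := (Fin n → ℕ) × (Sym2 (Fin n) → ZMod 2)

lemma wtN_mk (a b i : Fin n) :
    wtN n s(a, b) i = (if i = a then 1 else 0) + (if i = b then 1 else 0) := rfl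

lemma wtN_eq (s : Sym2 (Fin n)) (i : Fin n) :
    wtN n s i = (∑ j, if s = s(i, j) then 1 else 0) + if s = s(i, i) then 1 else 0 := by
  induction s using Sym2.ind with
  | _ a b =>
    rw [wtN_mk]
    by_cases ha : i = a
    · subst ha
      by_cases hb : i = b
      · subst hb
        simp
      · have : b ≠ i := fun h => hb h.symm
        simp [hb, this]
    · by_cases hb : i = b
      · subst hb
        have : a ≠ i := fun h => ha h.symm
        simp [ha, this]
      · have h1 : a ≠ i := fun h => ha h.symm
        have h2 : b ≠ i := fun h => hb h.symm
        simp [ha, hb, h1, h2]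

lemma VN_apply (u : Sym2 (Fin n) →₀ ℕ) (i : Fin n) :
    VN n u i = ∑ j, u s(i, j) + u s(i, i) := by
  unfold VN
  simp_rw [wtN_eq, mul_add, Finset.mul_sum, Finset.sum_add_distrib]
  rw [Finset.sum_comm]
  simp

/-- off-diagonal parities -/
def par (u : Sym2 (Fin n) →₀ ℕ) : Sym2 (Fin n) → ZMod 2 :=
  fun s => if s.IsDiag then 0 else (u s : ZMod 2)

/-- the bigraded degree of a monomial -/
def phi (u : Sym2 (Fin n) →₀ ℕ) : Gam n := (VN n u, par n u)

lemma VN_add (u v : Sym2 (Fin n) →₀ ℕ) : VN n (u + v) = VN n u + VN n v := by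
  funext i
  simp [VN, add_mul, Finset.sum_add_distrib]

lemma par_add (u v : Sym2 (Fin n) →₀ ℕ) : par n (u + v) = par n u + par n v := by
  funext s
  by_cases h : s.IsDiag <;> simp [par, h]

lemma phi_add (u v : Sym2 (Fin n) →₀ ℕ) : phi n (u + v) = phi n u + phi n v := by
  simp [phi, VN_add, par_add]

lemma phi_zero : phi n 0 = 0 := by
  refine Prod.ext ?_ ?_
  · funext i; simp [phi, VN]
  · funext s; simp [phi, par]

/-- the presentation of `R / J` as a monoid algebra -/
noncomputable def Phi : R n k →ₐ[k] AddMonoidAlgebra k (Gam n) :=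
  aeval fun s => AddMonoidAlgebra.single (phi n (Finsupp.single s 1)) 1

lemma phi_nsmul (u : Sym2 (Fin n) →₀ ℕ) (m : ℕ) : phi n (m • u) = m • phi n u := by
  induction m with
  | zero => simp [phi_zero]
  | succ m ih => rw [succ_nsmul, succ_nsmul, phi_add, ih]

lemma Phi_monomial_one (u : Sym2 (Fin n) →₀ ℕ) :
    Phi n k (monomial u 1) = AddMonoidAlgebra.single (phi n u) 1 := by
  induction u using Finsupp.induction_linear with
  | zero => rw [phi_zero]; exact map_one (Phi n k)
  | add u v hu hv =>
    have : (monomial (u + v) (1 : k)) = monomial u 1 * monomial v 1 := by simp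
    rw [this, map_mul, hu, hv, AddMonoidAlgebra.single_mul_single, phi_add, one_mul]
  | single s m =>
    rw [← X_pow_eq_monomial, map_pow]
    have : Phi n k (X s) = AddMonoidAlgebra.single (phi n (Finsupp.single s 1)) 1 := by
      simp [Phi]
    rw [this, AddMonoidAlgebra.single_pow, one_pow, ← phi_nsmul]
    simp

lemma Phi_monomial (u : Sym2 (Fin n) →₀ ℕ) (r : k) :
    Phi n k (monomial u r) = AddMonoidAlgebra.single (phi n u) r := by
  have : monomial u r = r • monomial u (1 : k) := by simp [smul_monomial]
  rw [this, map_smul, Phi_monomial_one]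
  simp

/-- valid parity patterns in degree `a` -/
def TT (a : Fin n → ℕ) : Finset (Sym2 (Fin n) → ZMod 2) :=
  Finset.univ.filter fun T =>
    (∀ s : Sym2 (Fin n), s.IsDiag → T s = 0) ∧ ∀ i, ∑ j, T s(i, j) = (a i : ZMod 2)

lemma mem_TT (a : Fin n → ℕ) (T : Sym2 (Fin n) → ZMod 2) : T ∈ TT n a ↔
    (∀ s : Sym2 (Fin n), s.IsDiag → T s = 0) ∧ ∀ i, ∑ j, T s(i, j) = (a i : ZMod 2) := by
  simp [TT]

/-- degree of a parity pattern -/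
def dg (T : Sym2 (Fin n) → ZMod 2) (i : Fin n) : ℕ := ∑ j, (T s(i, j)).val

lemma zmod2_add_self (x : ZMod 2) : x + x = 0 := CharTwo.add_self_eq_zero x

lemma par_mem_TT (u : Sym2 (Fin n) →₀ ℕ) : par n u ∈ TT n (VN n u) := by
  rw [mem_TT]
  refine ⟨fun s hs => by simp [par, hs], fun i => ?_⟩
  have h : ∀ j, par n u s(i, j) = (u s(i, j) : ZMod 2) + if j = i then (u s(i, i) : ZMod 2) else 0 := by
    intro j
    by_cases hj : j = i
    · subst hj; simp [par, zmod2_add_self]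
    · have : i ≠ j := fun h => hj h.symm
      simp [par, hj, this]
  simp_rw [h, Finset.sum_add_distrib]
  rw [VN_apply]
  simp

lemma val_par (u : Sym2 (Fin n) →₀ ℕ) (i j : Fin n) :
    (par n u s(i, j)).val = if i = j then 0 else u s(i, j) % 2 := by
  by_cases h : i = j
  · simp [par, h]
  · simp [par, h, ZMod.val_natCast]

lemma dg_par_le (u : Sym2 (Fin n) →₀ ℕ) (i : Fin n) : dg n (par n u) i ≤ VN n u i := by
  rw [VN_apply]
  refine le_trans (Finset.sum_le_sum fun j _ => ?_) (Nat.le_add_right _ _)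
  rw [val_par]
  split_ifs
  · exact Nat.zero_le _
  · exact Nat.mod_le _ _

/-- canonical representative -/
noncomputable def rr (g : Gam n) : Sym2 (Fin n) →₀ ℕ :=
  Finsupp.equivFunOnFinite.symm fun s =>
    Sym2.lift ⟨fun i j => if i = j then (g.1 i - dg n g.2 i) / 2 else (g.2 s(i, j)).val, fun i j => by
      by_cases h : i = j
      · subst h; rfl
      · have h' : j ≠ i := fun h' => h h'.symm
        simp only [h, h', if_false]; rw [Sym2.eq_swap]⟩ s

lemma rr_apply (g : Gam n) (i j : Fin n) : rr n g s(i, j) =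
    if i = j then (g.1 i - dg n g.2 i) / 2 else (g.2 s(i, j)).val := rfl

lemma dg_parity {a : Fin n → ℕ} {T : Sym2 (Fin n) → ZMod 2} (hT : T ∈ TT n a) (i : Fin n) :
    dg n T i % 2 = a i % 2 := by
  have h := ((mem_TT n a T).1 hT).2 i
  have : ((dg n T i : ℕ) : ZMod 2) = (a i : ZMod 2) := by
    rw [← h, dg]; simp
  exact (ZMod.natCast_eq_natCast_iff' _ _ _).1 this

lemma phi_rr (a : Fin n → ℕ) (T : Sym2 (Fin n) → ZMod 2) (hT : T ∈ TT n a)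
    (hd : ∀ i, dg n T i ≤ a i) : phi n (rr n (a, T)) = (a, T) := by
  have h0 := ((mem_TT n a T).1 hT).1
  refine Prod.ext ?_ ?_
  · funext i
    change VN n (rr n (a, T)) i = a i
    rw [VN_apply]
    have h : ∀ j, rr n (a, T) s(i, j) = (T s(i, j)).val +
        if j = i then (a i - dg n T i) / 2 else 0 := by
      intro j
      rw [rr_apply]
      by_cases hj : j = i
      · subst hj
        have := h0 s(j, j) (by simp)
        simp [this]
      · have : i ≠ j := fun h => hj h.symm
        simp [hj, this]
    rw [rr_apply, if_pos rfl]
    simp_rw [h, Finset.sum_add_distrib]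
    have h1 := dg_parity n hT i
    have h2 := hd i
    simp only [Finset.sum_ite_eq', Finset.mem_univ, if_true]
    change dg n T i + _ + _ = _
    omega
  · funext s
    change par n (rr n (a, T)) s = T s
    induction s using Sym2.ind with
    | _ i j =>
      by_cases h : i = j
      · subst h; rw [h0 s(i, i) (by simp)]; simp [par]
      · simp [par, h, rr_apply]

lemma rr_phi (u : Sym2 (Fin n) →₀ ℕ) (hu : ∀ s : Sym2 (Fin n), ¬s.IsDiag → u s ≤ 1) :
    rr n (phi n u) = u := by
  have h2 : ∀ i j : Fin n, i ≠ j → u s(i, j) % 2 = u s(i, j) := by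
    intro i j h
    have := hu s(i, j) (by simpa using h)
    omega
  ext s
  induction s using Sym2.ind with
  | _ i j =>
    rw [rr_apply]
    by_cases h : i = j
    · subst h
      rw [if_pos rfl]
      have h1 : ∀ j, u s(i, j) = (par n u s(i, j)).val + if j = i then u s(i, i) else 0 := by
        intro j
        rw [val_par]
        by_cases hj : j = i
        · subst hj; simp
        · have : i ≠ j := fun h => hj h.symm
          simp [hj, this, h2 i j this]
      have h3 : VN n u i = dg n (par n u) i + 2 * u s(i, i) := by
        rw [VN_apply, dg]
        conv_lhs => enter [1]; rw [Finset.sum_congr rfl fun j _ => h1 j]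
        rw [Finset.sum_add_distrib]
        simp
        ring
      simp only [phi]
      omega
    · rw [if_neg h]
      change (par n u s(i, j)).val = _
      rw [val_par, if_neg h, h2 i j h]

lemma phi_gen (i j : Fin n) (h : i ≠ j) :
    phi n (Finsupp.single s(i, i) 1 + Finsupp.single s(j, j) 1) = phi n (Finsupp.single s(i, j) 2) := by
  refine Prod.ext ?_ ?_
  · funext l
    simp only [phi, VN_add]
    simp only [Pi.add_apply, VN]
    simp [Finsupp.single_apply, wtN_mk]
    ring
  · funext s
    simp only [phi, par]
    by_cases hs : s.IsDiag
    · simp [hs]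
    · have h1 : s(i, i) ≠ s := by rintro rfl; simp at hs
      have h2 : s(j, j) ≠ s := by rintro rfl; simp at hs
      have h3 : (2 : ZMod 2) = 0 := rfl
      by_cases h4 : s(i, j) = s <;> simp [hs, h1, h2, h3, h4, Finsupp.single_apply]

lemma gen_mem (i j : Fin n) (h : i ≠ j) :
    (X s(i, i) * X s(j, j) - X s(i, j) ^ 2 : R n k) ∈ Jideal n k := by
  rcases lt_or_gt_of_ne h with h | h
  · exact Ideal.subset_span ⟨i, j, h, rfl⟩
  · refine Ideal.subset_span ⟨j, i, h, ?_⟩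
    rw [mul_comm, Sym2.eq_swap (a := i) (b := j)]

lemma Phi_J {f : R n k} (hf : f ∈ Jideal n k) : Phi n k f = 0 := by
  have : Jideal n k ≤ RingHom.ker (Phi n k) := by
    rw [Jideal, Ideal.span_le]
    rintro _ ⟨i, j, hij, rfl⟩
    rw [SetLike.mem_coe, RingHom.mem_ker, map_sub, sub_eq_zero]
    have h1 : (X s(i, i) * X s(j, j) : R n k) =
        monomial (Finsupp.single s(i, i) 1 + Finsupp.single s(j, j) 1) 1 := by
      simp [X]
    rw [h1, X_pow_eq_monomial, Phi_monomial, Phi_monomial, phi_gen n i j hij.ne]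
  exact this hf

lemma monomial_sub_mem (N : ℕ) : ∀ u : Sym2 (Fin n) →₀ ℕ,
    (∑ s : Sym2 (Fin n), if s.IsDiag then 0 else u s) ≤ N →
    (monomial u 1 - monomial (rr n (phi n u)) 1 : R n k) ∈ Jideal n k := by
  induction N with
  | zero =>
    intro u hu
    rw [rr_phi, sub_self]
    · exact Ideal.zero_mem _
    · intro s hs
      have := Finset.single_le_sum (f := fun s : Sym2 (Fin n) => if s.IsDiag then 0 else u s)
        (fun _ _ => Nat.zero_le _) (Finset.mem_univ s)
      simp only [hs, if_false] at this
      omega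
  | succ N ih =>
    intro u hu
    by_cases hc : ∀ s : Sym2 (Fin n), ¬s.IsDiag → u s ≤ 1
    · rw [rr_phi n u hc, sub_self]
      exact Ideal.zero_mem _
    · push Not at hc
      obtain ⟨s, hs, h1⟩ := hc
      induction s using Sym2.ind with
      | _ i j =>
        have hij : i ≠ j := by simpa using hs
        obtain ⟨v, rfl⟩ : ∃ v, u = v + Finsupp.single s(i, j) 2 :=
          ⟨u - Finsupp.single s(i, j) 2, (tsub_add_cancel_of_le (Finsupp.single_le_iff.2 h1)).symm⟩
        set w := v + (Finsupp.single s(i, i) 1 + Finsupp.single s(j, j) 1) with hw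
        have hphi : phi n (v + Finsupp.single s(i, j) 2) = phi n w := by
          rw [hw, phi_add, phi_add, phi_gen n i j hij]
        have hmem : (monomial (v + Finsupp.single s(i, j) 2) 1 - monomial w 1 : R n k)
            ∈ Jideal n k := by
          have : (monomial (v + Finsupp.single s(i, j) 2) 1 - monomial w 1 : R n k) =
            - monomial v 1 * (X s(i, i) * X s(j, j) - X s(i, j) ^ 2) := by
            have h1 : (monomial (v + Finsupp.single s(i, j) 2) 1 : R n k) =
                monomial v 1 * X s(i, j) ^ 2 := by
              rw [X_pow_eq_monomial, monomial_mul, one_mul]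
            have h2 : (monomial w 1 : R n k) = monomial v 1 * (X s(i, i) * X s(j, j)) := by
              simp [hw, X]
            rw [h1, h2]; ring
          rw [this]
          exact Ideal.mul_mem_left _ _ (gen_mem n k i j hij)
        have hw2 : (∑ s : Sym2 (Fin n), if s.IsDiag then 0 else w s) ≤ N := by
          have e1 : (∑ s : Sym2 (Fin n), if s.IsDiag then 0 else w s) =
              ∑ s : Sym2 (Fin n), if s.IsDiag then 0 else v s := by
            refine Finset.sum_congr rfl fun s _ => ?_
            by_cases hs : s.IsDiag
            · simp [hs]
            · have h1 : s(i, i) ≠ s := by rintro rfl; simp at hs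
              have h2 : s(j, j) ≠ s := by rintro rfl; simp at hs
              simp [hs, hw, Finsupp.single_apply, h1, h2]
          have e2 : (∑ s : Sym2 (Fin n), if s.IsDiag then 0 else
              (v + Finsupp.single s(i, j) 2 : Sym2 (Fin n) →₀ ℕ) s) =
              (∑ s : Sym2 (Fin n), if s.IsDiag then 0 else v s) + 2 := by
            have : ∀ s : Sym2 (Fin n), (if s.IsDiag then 0 else
              (v + Finsupp.single s(i, j) 2 : Sym2 (Fin n) →₀ ℕ) s) =
              (if s.IsDiag then 0 else v s) + (if s(i, j) = s then 2 else 0) := by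
              intro s
              by_cases hd : s.IsDiag
              · have : s(i, j) ≠ s := by rintro rfl; exact hs hd
                simp [hd, this]
              · simp [hd, Finsupp.single_apply]
            simp_rw [this, Finset.sum_add_distrib]
            simp
          omega
        have := Ideal.add_mem _ hmem (ih w hw2)
        rw [hphi]
        simpa using this

lemma mem_J_of_Phi {f : R n k} (hf : Phi n k f = 0) : f ∈ Jideal n k := by
  let L := Finsupp.linearCombination k
    (fun g : Gam n => Ideal.Quotient.mkₐ k (Jideal n k) (monomial (rr n g) 1))
  have key : ∀ f : R n k, L (Phi n k f).coeff = Ideal.Quotient.mkₐ k (Jideal n k) f := by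
    intro f
    induction f using MvPolynomial.induction_on' with
    | monomial u r =>
      have h1 : monomial u r = r • monomial u (1 : k) := by simp [smul_monomial]
      rw [Phi_monomial, AddMonoidAlgebra.coeff_single, Finsupp.linearCombination_single, h1,
        map_smul]
      congr 1
      symm
      exact (Ideal.Quotient.eq).2 (monomial_sub_mem n k _ u le_rfl)
    | add p q hp hq =>
      rw [map_add, map_add, AddMonoidAlgebra.coeff_add, map_add, hp, hq]
  have := key f
  rw [hf, AddMonoidAlgebra.coeff_zero, map_zero] at this
  exact Ideal.Quotient.eq_zero_iff_mem.1 this.symm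

/-- the full fiber sum in degree `a` -/
noncomputable def FF (a : Fin n → ℕ) : AddMonoidAlgebra k (Gam n) :=
  ∑ T ∈ TT n a, AddMonoidAlgebra.single ((a, T) : Gam n) (1 : k)

lemma FF_coeff (a b : Fin n → ℕ) (T : Sym2 (Fin n) → ZMod 2) :
    (FF n k a).coeff (b, T) = if b = a ∧ T ∈ TT n a then 1 else 0 := by
  classical
  rw [FF, AddMonoidAlgebra.coeff_sum, Finsupp.finsetSum_apply]
  simp only [AddMonoidAlgebra.coeff_single, Finsupp.single_apply, Prod.mk.injEq]
  by_cases h : b = a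
  · subst h; simp
  · have : a ≠ b := fun h' => h h'.symm
    simp [h, this]

lemma TT_add {a b : Fin n → ℕ} {S T : Sym2 (Fin n) → ZMod 2} (hS : S ∈ TT n a) (hT : T ∈ TT n b) :
    S + T ∈ TT n (a + b) := by
  rw [mem_TT] at *
  refine ⟨fun s hs => by simp [hS.1 s hs, hT.1 s hs], fun i => ?_⟩
  simp [Finset.sum_add_distrib, hS.2 i, hT.2 i]

lemma TT_congr {a b : Fin n → ℕ} (h : ∀ i, (a i : ZMod 2) = b i) : TT n a = TT n b := by
  ext T
  simp [mem_TT, h]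

lemma fun_add_self (T : Sym2 (Fin n) → ZMod 2) : T + T = 0 := by
  funext s; exact zmod2_add_self _

lemma TT_add_self {a : Fin n → ℕ} {S T : Sym2 (Fin n) → ZMod 2} (hS : S ∈ TT n a)
    (hT : T ∈ TT n a) : S + T ∈ TT n 0 := by
  have := TT_add n hS hT
  rwa [TT_congr n (b := 0)] at this
  intro i
  simp [zmod2_add_self]

lemma single_mul_FF (a b : Fin n → ℕ) (S : Sym2 (Fin n) → ZMod 2) (hS : S ∈ TT n b) :
    AddMonoidAlgebra.single ((b, S) : Gam n) (1 : k) * FF n k a = FF n k (b + a) := by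
  rw [FF, FF, Finset.mul_sum]
  have key : ∀ T, S + (S + T) = T := by
    intro T; rw [← add_assoc, fun_add_self, zero_add]
  refine Finset.sum_nbij' (fun T => S + T) (fun T => S + T) ?_ ?_ ?_ ?_ ?_
  · intro T hT; exact TT_add n hS hT
  · intro T hT
    have := TT_add n hS hT
    rwa [TT_congr n (b := a)] at this
    intro i
    simp [← add_assoc, zmod2_add_self]
  · intro T _; exact key T
  · intro T _; exact key T
  · intro T _
    rw [AddMonoidAlgebra.single_mul_single, one_mul]
    rfl

lemma Phi_pplusAt (b : Fin n → ℕ) (hb : ∀ T ∈ TT n b, ∀ i, dg n T i ≤ b i) :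
    Phi n k (pplusAt n k b) = FF n k b := by
  classical
  rw [pplusAt, map_sum, FF]
  refine Finset.sum_nbij' (fun u => par n u) (fun T => rr n (b, T)) ?_ ?_ ?_ ?_ ?_
  · intro u hu
    simp only [Finset.mem_filter, fiberFinset, Set.Finite.mem_toFinset, fiber, Set.mem_setOf_eq] at hu
    rw [← hu.1]; exact par_mem_TT n u
  · intro T hT
    have h := phi_rr n b T hT (hb T hT)
    simp only [Finset.mem_filter, fiberFinset, Set.Finite.mem_toFinset, fiber, Set.mem_setOf_eq]
    refine ⟨congrArg Prod.fst h, fun s hs => ?_⟩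
    induction s using Sym2.ind with
    | _ i j =>
      have hij : i ≠ j := by simpa using hs
      rw [rr_apply, if_neg hij]
      have := ZMod.val_lt (T s(i, j))
      exact Nat.le_of_lt_succ this
  · intro u hu
    simp only [Finset.mem_filter, fiberFinset, Set.Finite.mem_toFinset, fiber, Set.mem_setOf_eq] at hu
    rw [← hu.1]
    exact rr_phi n u hu.2
  · intro T hT
    exact congrArg Prod.snd (phi_rr n b T hT (hb T hT))
  · intro u hu
    simp only [Finset.mem_filter, fiberFinset, Set.Finite.mem_toFinset, fiber, Set.mem_setOf_eq] at hu
    rw [Phi_monomial, ← hu.1]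
    rfl

lemma dg_le {a : Fin n → ℕ} {T : Sym2 (Fin n) → ZMod 2} (hT : T ∈ TT n a) (i : Fin n) :
    dg n T i ≤ n - 1 := by
  rw [dg, ← Finset.add_sum_erase _ _ (Finset.mem_univ i),
    ((mem_TT n a T).1 hT).1 s(i, i) (by simp)]
  have : ∑ j ∈ Finset.univ.erase i, (T s(i, j)).val ≤ ∑ j ∈ Finset.univ.erase i, 1 :=
    Finset.sum_le_sum fun j _ => Nat.le_of_lt_succ (ZMod.val_lt (T s(i, j)))
  simpa using this

lemma bsel_ok (hn : 3 ≤ n) (j : Fin n) : ∀ T ∈ TT n (bsel n j), ∀ i, dg n T i ≤ bsel n j i := by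
  intro T hT i
  have h1 := dg_le n hT i
  have h2 := dg_parity n hT i
  have h3 : n - 2 ≤ bsel n j i := by
    unfold bsel; split_ifs <;> omega
  by_contra hlt
  omega

lemma Phi_pplus (hn : 3 ≤ n) (j : Fin n) : Phi n k (pplus n k j) = FF n k (bsel n j) :=
  Phi_pplusAt n k _ (bsel_ok n hn j)

lemma VN_single (i j : Fin n) :
    VN n (Finsupp.single s(i, j) 1) = Pi.single i 1 + Pi.single j 1 := by
  funext l
  simp [VN, Finsupp.single_apply, wtN_mk, Pi.single_apply]

lemma sum_VN_even (u : Sym2 (Fin n) →₀ ℕ) : Even (∑ i, VN n u i) := by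
  unfold VN
  rw [Finset.sum_comm]
  refine Finset.even_sum _ fun s _ => ?_
  rw [← Finset.mul_sum]
  refine Even.mul_left ?_ _
  induction s using Sym2.ind with
  | _ a b => simp [wtN_mk, Finset.sum_add_distrib]

lemma exists_VN_aux (N : ℕ) : ∀ d : Fin n → ℕ, ∑ i, d i = N →
    ∃ u : Sym2 (Fin n) →₀ ℕ, VN n u = d ∨ ∃ j, VN n u + Pi.single j 1 = d := by
  induction N with
  | zero =>
    intro d hd
    refine ⟨0, Or.inl ?_⟩
    funext i
    have : d i = 0 := by simpa using (Finset.sum_eq_zero_iff.1 hd) i (Finset.mem_univ i)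
    simp [VN, this]
  | succ N ih =>
    intro d hd
    obtain ⟨i, hi⟩ : ∃ i, d i ≠ 0 := by
      by_contra hcon
      push Not at hcon
      simp [hcon] at hd
    obtain ⟨d', rfl⟩ : ∃ d', d = d' + Pi.single i 1 := by
      refine ⟨d - Pi.single i 1, (tsub_add_cancel_of_le ?_).symm⟩
      intro l
      by_cases h : l = i
      · subst h; simp; omega
      · simp [h]
    have hd' : ∑ i, d' i = N := by
      simp [Finset.sum_add_distrib] at hd
      exact hd
    obtain ⟨u, h | ⟨j, h⟩⟩ := ih d' hd'
    · exact ⟨u, Or.inr ⟨i, by rw [h]⟩⟩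
    · exact ⟨u + Finsupp.single s(j, i) 1, Or.inl (by rw [VN_add, VN_single, ← add_assoc, h])⟩

lemma exists_VN (d : Fin n → ℕ) (hd : Even (∑ i, d i)) : ∃ u, VN n u = d := by
  obtain ⟨u, h | ⟨j, h⟩⟩ := exists_VN_aux n _ d rfl
  · exact ⟨u, h⟩
  · exfalso
    have h1 := sum_VN_even n u
    rw [← h] at hd
    simp only [Pi.add_apply, Finset.sum_add_distrib] at hd
    rw [Finset.sum_pi_single'] at hd
    simp at hd
    rw [Nat.even_add_one] at hd
    exact hd h1

lemma sum_bsel_even (hn : 3 ≤ n) (j : Fin n) : Even (∑ i, bsel n j i) := by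
  unfold bsel
  by_cases h : n % 2 = 1
  · simp only [h, if_true, Finset.sum_add_distrib]
    simp only [Finset.sum_const, Finset.card_univ, Fintype.card_fin, Finset.sum_ite_eq',
      Finset.mem_univ, if_true, smul_eq_mul]
    have h1 : Odd n := Nat.odd_iff.2 h
    have h2 : Odd (n - 2) := Nat.odd_iff.2 (by omega)
    exact (h1.mul h2).add_one
  · simp only [h, if_false, Finset.sum_const, Finset.card_univ, Fintype.card_fin, smul_eq_mul]
    exact (Nat.even_iff.2 (by omega)).mul_right _

lemma exists_decomp (hn : 3 ≤ n) (v : Sym2 (Fin n) →₀ ℕ) (hv : ∀ i, n - 2 ≤ VN n v i) :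
    ∃ j u, VN n u + bsel n j = VN n v := by
  obtain ⟨j, hj⟩ : ∃ j, bsel n j ≤ VN n v := by
    by_cases h : n % 2 = 1
    · obtain ⟨j, hj⟩ : ∃ j, n - 2 < VN n v j := by
        by_contra hcon
        push Not at hcon
        have h1 : ∀ i, VN n v i = n - 2 := fun i => le_antisymm (hcon i) (hv i)
        have h2 := sum_VN_even n v
        simp only [h1, Finset.sum_const, Finset.card_univ, Fintype.card_fin, smul_eq_mul] at h2
        have h3 : Odd n := Nat.odd_iff.2 h
        have h4 : Odd (n - 2) := Nat.odd_iff.2 (by omega)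
        exact (Nat.not_even_iff_odd.2 (h3.mul h4)) h2
      refine ⟨j, fun i => ?_⟩
      simp only [bsel, h, if_true]
      by_cases hi : i = j
      · subst hi; simp; omega
      · simp only [hi, if_false]; exact hv i
    · refine ⟨⟨0, by omega⟩, fun i => ?_⟩
      simp only [bsel, h, if_false]; exact hv i
  obtain ⟨d, hd⟩ : ∃ d, VN n v = d + bsel n j := ⟨VN n v - bsel n j, (tsub_add_cancel_of_le hj).symm⟩
  have h1 := sum_VN_even n v
  rw [hd] at h1
  simp only [Pi.add_apply, Finset.sum_add_distrib] at h1
  obtain ⟨u, hu⟩ := exists_VN n d ((Nat.even_add.1 h1).2 (sum_bsel_even n hn j))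
  exact ⟨j, u, by rw [hu, hd]⟩

/-- the parity pattern of a single edge -/
def edge (i j : Fin n) : Sym2 (Fin n) → ZMod 2 := fun s => if s = s(i, j) then 1 else 0

lemma edge_eq_par (i j : Fin n) (h : i ≠ j) : edge n i j = par n (Finsupp.single s(i, j) 1) := by
  funext s
  simp only [edge, par]
  by_cases hs : s = s(i, j)
  · subst hs; simp [h]
  · have : s(i, j) ≠ s := fun h => hs h.symm
    simp [hs, this]

lemma tri_mem (i j l : Fin n) (hij : i ≠ j) (hjl : j ≠ l) (hil : i ≠ l) :
    edge n i j + edge n j l + edge n i l ∈ TT n 0 := by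
  rw [edge_eq_par n i j hij, edge_eq_par n j l hjl, edge_eq_par n i l hil]
  have := TT_add n (TT_add n (par_mem_TT n (Finsupp.single s(i, j) 1))
    (par_mem_TT n (Finsupp.single s(j, l) 1))) (par_mem_TT n (Finsupp.single s(i, l) 1))
  rwa [TT_congr n (b := 0)] at this
  intro m
  simp only [VN_single]
  simp only [Pi.add_apply, Pi.zero_apply, Nat.cast_add, Nat.cast_zero]
  generalize ((Pi.single i 1 : Fin n → ℕ) m : ZMod 2) = x
  generalize ((Pi.single j 1 : Fin n → ℕ) m : ZMod 2) = y
  generalize ((Pi.single l 1 : Fin n → ℕ) m : ZMod 2) = z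
  revert x y z
  decide

lemma exists_high_aux {a : Fin n → ℕ} {T : Sym2 (Fin n) → ZMod 2} (hT : T ∈ TT n a) (i l : Fin n)
    (hil : i ≠ l) (S : Finset (Fin n)) : i ∉ S → l ∉ S →
    ∃ T' ∈ TT n a, ∀ j ∈ S, T' s(i, j) = 1 := by
  classical
  induction S using Finset.induction_on with
  | empty => intro _ _; exact ⟨T, hT, by simp⟩
  | insert j S hj ih =>
    intro hi hl
    simp only [Finset.mem_insert, not_or] at hi hl
    obtain ⟨T', hT', h⟩ := ih hi.2 hl.2
    by_cases h1 : T' s(i, j) = 1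
    · refine ⟨T', hT', fun x hx => ?_⟩
      rcases Finset.mem_insert.1 hx with rfl | hx
      · exact h1
      · exact h x hx
    · have h0 : T' s(i, j) = 0 := by
        revert h1; generalize T' s(i, j) = x; revert x; decide
      refine ⟨T' + (edge n i j + edge n j l + edge n i l), ?_, fun x hx => ?_⟩
      · simpa using TT_add n hT' (tri_mem n i j l hi.1 (fun h => hl.1 h.symm) hil)
      · rcases Finset.mem_insert.1 hx with rfl | hx'
        · have hxl : x ≠ l := fun h => hl.1 h.symm
          simp [edge, h0, hi.1, hil, hxl]
        · have hxj : x ≠ j := fun h => hj (h ▸ hx')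
          have hxl : x ≠ l := fun h => hl.2 (h ▸ hx')
          have hxi : x ≠ i := fun h => hi.2 (h ▸ hx')
          simp [edge, h x hx', hxj, hxl, hi.1, hil]

lemma exists_high (hn : 3 ≤ n) {a : Fin n → ℕ} {T : Sym2 (Fin n) → ZMod 2} (hT : T ∈ TT n a)
    (i : Fin n) : ∃ T' ∈ TT n a, n - 2 ≤ dg n T' i := by
  classical
  haveI : Nontrivial (Fin n) := Fin.nontrivial_iff_two_le.2 (by omega)
  obtain ⟨l, hl⟩ := exists_ne i
  obtain ⟨T', hT', h⟩ := exists_high_aux n hT i l hl.symm ((Finset.univ.erase i).erase l)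
    (by simp) (by simp)
  refine ⟨T', hT', ?_⟩
  calc n - 2 = ∑ j ∈ (Finset.univ.erase i).erase l, 1 := by
        rw [Finset.sum_const, smul_eq_mul, mul_one, Finset.card_erase_of_mem (by simp [hl]),
          Finset.card_erase_of_mem (Finset.mem_univ i), Finset.card_univ, Fintype.card_fin]
        omega
    _ = ∑ j ∈ (Finset.univ.erase i).erase l, (T' s(i, j)).val :=
        Finset.sum_congr rfl fun j hj => by rw [h j hj]; rfl
    _ ≤ dg n T' i := Finset.sum_le_sum_of_subset (Finset.subset_univ _)

lemma exists_phi_of_coeff {g : R n k} : ∀ {γ : Gam n}, (Phi n k g).coeff γ ≠ 0 → ∃ u, phi n u = γ := by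
  classical
  induction g using MvPolynomial.induction_on' with
  | monomial u r =>
    intro γ h
    rw [Phi_monomial, AddMonoidAlgebra.coeff_single, Finsupp.single_apply] at h
    exact ⟨u, by by_contra hc; simp [hc] at h⟩
  | add p q hp hq =>
    intro γ h
    rw [map_add, AddMonoidAlgebra.coeff_add, Finsupp.add_apply] at h
    by_cases h1 : (Phi n k p).coeff γ = 0
    · rw [h1, zero_add] at h; exact hq h
    · exact hp h1

/-- invariance under the group of even parity patterns -/
def Inv (x : AddMonoidAlgebra k (Gam n)) : Prop :=
  ∀ τ ∈ TT n 0, AddMonoidAlgebra.single ((0, τ) : Gam n) (1 : k) * x = x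

lemma Inv.coeff_eq {x : AddMonoidAlgebra k (Gam n)} (hx : Inv n k x) {a : Fin n → ℕ}
    {T T' : Sym2 (Fin n) → ZMod 2} (hT : T ∈ TT n a) (hT' : T' ∈ TT n a) :
    x.coeff (a, T') = x.coeff (a, T) := by
  have h := hx _ (TT_add_self n hT' hT)
  have e1 : ((a, T') : Gam n) = (0, T' + T) + (a, T) := by
    rw [Prod.mk_add_mk, zero_add, add_assoc, fun_add_self, add_zero]
  conv_lhs => rw [← h, e1]
  rw [AddMonoidAlgebra.coeff_single_mul_add, one_mul]

lemma Inv_FF (a : Fin n → ℕ) : Inv n k (FF n k a) := by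
  intro τ hτ
  rw [single_mul_FF n k a 0 τ hτ, zero_add]

lemma mem_of_Inv (hn : 3 ≤ n) (N : ℕ) : ∀ g : R n k, Inv n k (Phi n k g) →
    (Phi n k g).coeff.support.card ≤ N →
    g ∈ Jideal n k + Ideal.span (Set.range (pplus n k)) := by
  classical
  induction N with
  | zero =>
    intro g _ hc
    have h0 : (Phi n k g) = 0 := by
      rw [← AddMonoidAlgebra.coeff_eq_zero]
      simpa using hc
    exact Ideal.mem_sup_left (mem_J_of_Phi n k h0)
  | succ N ih =>
    intro g hg hc
    by_cases h0 : Phi n k g = 0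
    · exact Ideal.mem_sup_left (mem_J_of_Phi n k h0)
    obtain ⟨⟨a, T⟩, hγ⟩ : ∃ γ, (Phi n k g).coeff γ ≠ 0 := by
      by_contra hcon
      push Not at hcon
      exact h0 (AddMonoidAlgebra.coeff_eq_zero.1 (Finsupp.ext hcon))
    obtain ⟨v, hv⟩ := exists_phi_of_coeff n k hγ
    obtain ⟨rfl, rfl⟩ : VN n v = a ∧ par n v = T := ⟨congrArg Prod.fst hv, congrArg Prod.snd hv⟩
    have hT := par_mem_TT n v
    have hbig : ∀ i, n - 2 ≤ VN n v i := by
      intro i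
      obtain ⟨T', hT', hd⟩ := exists_high n hn hT i
      have h1 : (Phi n k g).coeff (VN n v, T') ≠ 0 := by
        rw [hg.coeff_eq n k hT hT']; exact hγ
      obtain ⟨w, hw⟩ := exists_phi_of_coeff n k h1
      have e1 : VN n w = VN n v := congrArg Prod.fst hw
      have e2 : par n w = T' := congrArg Prod.snd hw
      have := dg_par_le n w i
      rw [e1, e2] at this
      exact hd.trans this
    obtain ⟨j, u, hu⟩ := exists_decomp n hn v hbig
    set r := (Phi n k g).coeff (VN n v, par n v) with hr
    have hPhi : Phi n k (monomial u r * pplus n k j) = r • FF n k (VN n v) := by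
      have : monomial u r = r • monomial u (1 : k) := by simp [smul_monomial]
      rw [this, smul_mul_assoc, map_smul, map_mul, Phi_pplus n k hn, Phi_monomial_one, phi,
        single_mul_FF n k _ _ _ (par_mem_TT n u), hu]
    have hmem : monomial u r * pplus n k j ∈ Jideal n k + Ideal.span (Set.range (pplus n k)) :=
      Ideal.mem_sup_right (Ideal.mul_mem_left _ _ (Ideal.subset_span ⟨j, rfl⟩))
    have hsub : g - monomial u r * pplus n k j ∈
        Jideal n k + Ideal.span (Set.range (pplus n k)) := by
      apply ih
      · intro τ hτ
        rw [map_sub, hPhi, mul_sub, hg τ hτ, mul_smul_comm, Inv_FF n k _ τ hτ]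
      · have hss : (Phi n k (g - monomial u r * pplus n k j)).coeff.support ⊆
            (Phi n k g).coeff.support.erase (VN n v, par n v) := by
          rintro ⟨b, S⟩ hbS
          rw [Finsupp.mem_support_iff, map_sub, hPhi, AddMonoidAlgebra.coeff_sub,
            Finsupp.sub_apply, AddMonoidAlgebra.coeff_smul, Finsupp.smul_apply, FF_coeff] at hbS
          by_cases hb : b = VN n v ∧ S ∈ TT n (VN n v)
          · exfalso
            obtain ⟨rfl, hS⟩ := hb
            rw [if_pos ⟨rfl, hS⟩, hg.coeff_eq n k hT hS] at hbS
            simp [hr] at hbS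
          · rw [if_neg hb, smul_zero, sub_zero] at hbS
            rw [Finset.mem_erase, Finsupp.mem_support_iff]
            refine ⟨?_, hbS⟩
            intro heq
            apply hb
            rw [Prod.mk.injEq] at heq
            exact ⟨heq.1, heq.2 ▸ hT⟩
        have h1 := Finset.card_le_card hss
        rw [Finset.card_erase_of_mem (Finsupp.mem_support_iff.2 hγ)] at h1
        omega
    have := Ideal.add_mem _ hsub hmem
    simpa using this

lemma bsel_swap (i j : Fin n) : ∃ u v : Sym2 (Fin n) →₀ ℕ,
    u = Finsupp.single s(i, i) 1 ∧ VN n u + bsel n j = VN n v + bsel n i := by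
  by_cases h : n % 2 = 1
  · refine ⟨_, Finsupp.single s(i, j) 1, rfl, ?_⟩
    rw [VN_single, VN_single]
    funext l
    simp only [bsel, h, if_true, Pi.add_apply, Pi.single_apply]
    ring
  · refine ⟨_, Finsupp.single s(i, i) 1, rfl, ?_⟩
    congr 1
    funext l
    simp [bsel, h]

lemma swap_mem (hn : 3 ≤ n) (i j : Fin n) :
    X s(i, i) * pplus n k j ∈ Jideal n k + Ideal.span {pplus n k i} := by
  obtain ⟨u, v, hu, h⟩ := bsel_swap n i j
  have hX : (X s(i, i) : R n k) = monomial u 1 := by rw [hu]; rfl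
  have h1 : X s(i, i) * pplus n k j - monomial v 1 * pplus n k i ∈ Jideal n k := by
    apply mem_J_of_Phi
    rw [hX, map_sub, map_mul, map_mul, Phi_pplus n k hn, Phi_pplus n k hn, Phi_monomial_one,
      Phi_monomial_one, phi, phi, single_mul_FF n k _ _ _ (par_mem_TT n u),
      single_mul_FF n k _ _ _ (par_mem_TT n v), h, sub_self]
  have h2 := Ideal.add_mem _ (Ideal.mem_sup_left h1)
    (Ideal.mem_sup_right (Ideal.mul_mem_left (Ideal.span {pplus n k i}) (monomial v 1)
      (Ideal.subset_span rfl)))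
  rw [sub_add_cancel] at h2
  exact h2

lemma prod_X_eq (m : ℕ) : ∃ w : Sym2 (Fin n) →₀ ℕ,
    ((∏ s : Sym2 (Fin n), X s) ^ m : R n k) = monomial w 1 := by
  refine ⟨m • ∑ s : Sym2 (Fin n), Finsupp.single s 1, ?_⟩
  have : (∏ s : Sym2 (Fin n), X s : R n k) = monomial (∑ s : Sym2 (Fin n), Finsupp.single s 1) 1 := by
    rw [monomial_sum_one]; rfl
  rw [this, monomial_pow, one_pow]

end Aux

theorem saturation_of_pplus (n : ℕ) (hn : 3 ≤ n) (k : Type*) [Field k] (i : Fin n) :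
    {g : R n k | ∃ m : ℕ,
        (∏ s : Sym2 (Fin n), X s) ^ m * g ∈ Jideal n k + Ideal.span {pplus n k i}} =
      ↑(Jideal n k + Ideal.span (Set.range (pplus n k))) := by
  apply Set.Subset.antisymm
  · rintro g ⟨m, hm⟩
    obtain ⟨w, hw⟩ := prod_X_eq n k m
    rw [hw] at hm
    obtain ⟨f, hf, q, hq, hfq⟩ := Submodule.mem_sup.1 hm
    obtain ⟨h, rfl⟩ := Ideal.mem_span_singleton'.1 hq
    have hP : AddMonoidAlgebra.single (phi n w) (1 : k) * Phi n k g =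
        Phi n k h * FF n k (bsel n i) := by
      rw [← Phi_monomial_one, ← map_mul, ← hfq, map_add, Phi_J n k hf, zero_add, map_mul,
        Phi_pplus n k hn]
    refine mem_of_Inv n k hn _ g ?_ le_rfl
    intro τ hτ
    have h2 : AddMonoidAlgebra.single (phi n w) (1 : k) *
        (AddMonoidAlgebra.single ((0, τ) : Gam n) (1 : k) * Phi n k g) =
        AddMonoidAlgebra.single (phi n w) (1 : k) * Phi n k g := by
      rw [mul_left_comm, hP, mul_left_comm, Inv_FF n k _ τ hτ]
    rw [← AddMonoidAlgebra.coeff_inj]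
    ext γ
    have h3 := congrArg (fun x => x.coeff (phi n w + γ)) h2
    simpa only [AddMonoidAlgebra.coeff_single_mul_add, one_mul] using h3
  · intro g hg
    refine ⟨1, ?_⟩
    rw [pow_one]
    have hle : Jideal n k + Ideal.span (Set.range (pplus n k)) ≤
        Submodule.comap (LinearMap.mulLeft (R n k) (∏ s : Sym2 (Fin n), X s))
          (Jideal n k + Ideal.span {pplus n k i}) := by
      refine sup_le ?_ (Submodule.span_le.2 ?_)
      · intro f hf
        exact Ideal.mem_sup_left (Ideal.mul_mem_left _ _ hf)
      · rintro _ ⟨j, rfl⟩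
        change (∏ s : Sym2 (Fin n), X s) * pplus n k j ∈ Jideal n k + Ideal.span {pplus n k i}
        rw [← Finset.mul_prod_erase _ _ (Finset.mem_univ s(i, i)), mul_comm (X s(i, i)), mul_assoc]
        exact Ideal.mul_mem_left _ _ (swap_mem n k hn i j)
    exact hle hg

end Veronese
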